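/- arXiv:1209.3656 — 6 statements merged into one kernel-verified Lean document; each statement's English description precedes it below -/
import Mathlib

section
/- For all k, ℓ ∈ {0,…,n}, the sum α_k + α_ℓ equals α_{max(k,ℓ)} and the product α_k · α_ℓ again belongs to STR{a,b}; consequently STR{a,b} is closed under the addition and multiplication of the endomorphism semiring of the chain C_n, i.e., it is a subsemiring. -/
/-- Pointwise-max addition on endomorphisms of the chain `Fin N`. -/
def sAdd {N : ℕ} (f g : Fin N → Fin N) : Fin N → Fin N := fun i => max (f i) (g i)

/-- Multiplication in diagram order: `(f·g)(i) = g (f i)`. -/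
def sMul {N : ℕ} (f g : Fin N → Fin N) : Fin N → Fin N := fun i => g (f i)

/-- The element `α_k` of the string `STR{a,b}`: `α_k i = a` if `i ≤ N - k - 1`
    (equivalently `i + k < N`) and `α_k i = b` otherwise. -/
def alpha {N : ℕ} (a b : Fin N) (k : ℕ) : Fin N → Fin N :=
  fun i => if (i : ℕ) + k < N then a else b

/-!
For `a ≤ b` the value `α_k i` is nondecreasing in `k`, so the pointwise maximum of `α_k` and `α_ℓ`
is `α_{max(k,ℓ)}`. Composing `α_k` with any map `g` only replaces the values `a`, `b` by `g a`,
`g b`. As `α_ℓ` is monotone with values in `{a, b}`, the pair `(α_ℓ a, α_ℓ b)` is `(a, a)`,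
`(a, b)` or `(b, b)`, and `α_k · α_ℓ` is accordingly `α_0`, `α_k` or `α_n`.
-/

section alpha

variable {N : ℕ} {a b i j : Fin N} {k l : ℕ}

theorem alpha_of_add_lt (h : (i : ℕ) + k < N) : alpha a b k i = a :=
  if_pos h

theorem alpha_of_le_add (h : N ≤ (i : ℕ) + k) : alpha a b k i = b :=
  if_neg h.not_gt

theorem alpha_self (c : Fin N) (k : ℕ) : alpha c c k = fun _ => c :=
  funext fun _ => ite_self c

theorem alpha_zero (a b : Fin N) : alpha a b 0 = fun _ => a :=
  funext fun i => alpha_of_add_lt i.isLt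

theorem alpha_card (a b : Fin N) : alpha a b N = fun _ => b :=
  funext fun i => alpha_of_le_add (Nat.le_add_left N i)

theorem alpha_le_alpha (hab : a ≤ b) (h : (i : ℕ) + k ≤ j + l) :
    alpha a b k i ≤ alpha a b l j := by
  rcases lt_or_ge ((j : ℕ) + l) N with hj | hj
  · rw [alpha_of_add_lt hj, alpha_of_add_lt (h.trans_lt hj)]
  · rw [alpha_of_le_add hj]
    exact (ite_le_sup a b _).trans (sup_le hab le_rfl)

theorem monotone_alpha_index (hab : a ≤ b) (i : Fin N) : Monotone fun k => alpha a b k i :=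
  fun _ _ hkl => alpha_le_alpha hab (Nat.add_le_add_left hkl i)

theorem sAdd_alpha_alpha (hab : a ≤ b) (k l : ℕ) :
    sAdd (alpha a b k) (alpha a b l) = alpha a b (max k l) :=
  funext fun i => (monotone_alpha_index hab i).map_max.symm

theorem sMul_alpha (a b : Fin N) (k : ℕ) (g : Fin N → Fin N) :
    sMul (alpha a b k) g = alpha (g a) (g b) k :=
  funext fun _ => apply_ite g _ a b

theorem sMul_alpha_alpha_of_add_lt (hab : a ≤ b) (hb : (b : ℕ) + l < N) (k : ℕ) :
    sMul (alpha a b k) (alpha a b l) = alpha a b 0 := by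
  have ha : (a : ℕ) + l < N := (Nat.add_le_add_right hab l).trans_lt hb
  rw [sMul_alpha, alpha_of_add_lt ha, alpha_of_add_lt hb, alpha_self, alpha_zero]

theorem sMul_alpha_alpha_of_add_lt_of_le_add (ha : (a : ℕ) + l < N) (hb : N ≤ (b : ℕ) + l)
    (k : ℕ) : sMul (alpha a b k) (alpha a b l) = alpha a b k := by
  rw [sMul_alpha, alpha_of_add_lt ha, alpha_of_le_add hb]

theorem sMul_alpha_alpha_of_le_add (hab : a ≤ b) (ha : N ≤ (a : ℕ) + l) (k : ℕ) :
    sMul (alpha a b k) (alpha a b l) = alpha a b N := by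
  have hb : N ≤ (b : ℕ) + l := ha.trans (Nat.add_le_add_right hab l)
  rw [sMul_alpha, alpha_of_le_add ha, alpha_of_le_add hb, alpha_self, alpha_card]

end alpha

/-- For all `k, ℓ ∈ {0,…,n}`, `α_k + α_ℓ = α_{max(k,ℓ)}`, and
`α_k · α_ℓ` again belongs to `STR{a,b}`; hence `STR{a,b}` is closed under the
addition and multiplication of the endomorphism semiring of the chain `C_n`. -/
theorem stmt0 (n : ℕ) (a b : Fin n) (hab : a < b) :
    (∀ k ℓ : ℕ, k ≤ n → ℓ ≤ n →
      sAdd (alpha a b k) (alpha a b ℓ) = alpha a b (max k ℓ)) ∧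
    (∀ k ℓ : ℕ, k ≤ n → ℓ ≤ n →
      ∃ m ≤ n, sMul (alpha a b k) (alpha a b ℓ) = alpha a b m) := by
  refine ⟨fun k ℓ _ _ => sAdd_alpha_alpha hab.le k ℓ, fun k ℓ hk _ => ?_⟩
  rcases lt_or_ge ((b : ℕ) + ℓ) n with hb | hb
  · exact ⟨0, n.zero_le, sMul_alpha_alpha_of_add_lt hab.le hb k⟩
  rcases lt_or_ge ((a : ℕ) + ℓ) n with ha | ha
  · exact ⟨k, hk, sMul_alpha_alpha_of_add_lt_of_le_add ha hb k⟩
  · exact ⟨n, le_rfl, sMul_alpha_alpha_of_le_add hab.le ha k⟩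
end

section
/- For every k ∈ {0,…,n} and every s ∈ {0,…,n}: if 0 ≤ s ≤ n − b − 1 then α_k · α_s = α_0; if n − b ≤ s ≤ n − a − 1 then α_k · α_s = α_k; and if n − a ≤ s ≤ n then α_k · α_s = α_n. -/
/-!
Composing the step function `α_k`, with values `c ≤ d`, with any map `g` only changes its values:
`α_k · g` steps from `g c` to `g d` at the same place. For `g = α_s` in `STR{a,b}`, the three
ranges of `s` say whether the threshold `n - s` of `g` lies above `d`, in `(c, d]`, or at or
below `c`, so that `(g c, g d)` is `(a, a)`, `(a, b)` or `(b, b)` respectively.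
-/

section

variable {n : ℕ} {a b c d i : Fin n} {k s : ℕ}

theorem alpha_apply_of_add_lt (h : (i : ℕ) + k < n) : alpha a b k i = a :=
  if_pos h

theorem alpha_apply_of_le_add (h : n ≤ (i : ℕ) + k) : alpha a b k i = b :=
  if_neg h.not_gt

theorem alpha_zero_s1 (a b : Fin n) : alpha a b 0 = Function.const (Fin n) a :=
  funext fun i => alpha_apply_of_add_lt i.isLt

theorem alpha_length (a b : Fin n) : alpha a b n = Function.const (Fin n) b :=
  funext fun i => alpha_apply_of_le_add (Nat.le_add_left n i)

theorem alpha_same (a : Fin n) (k : ℕ) : alpha a a k = Function.const (Fin n) a :=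
  funext fun _ => ite_self a

theorem sMul_alpha_left (c d : Fin n) (k : ℕ) (g : Fin n → Fin n) :
    sMul (alpha c d k) g = alpha (g c) (g d) k :=
  funext fun i => apply_ite g ((i : ℕ) + k < n) c d

theorem sMul_alpha_alpha_of_add_lt_s1 (hcd : c ≤ d) (hd : (d : ℕ) + s < n) :
    sMul (alpha c d k) (alpha a b s) = alpha a b 0 := by
  have hc : (c : ℕ) + s < n := (Nat.add_le_add_right hcd s).trans_lt hd
  rw [sMul_alpha_left, alpha_apply_of_add_lt hc, alpha_apply_of_add_lt hd, alpha_same, alpha_zero_s1]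

theorem sMul_alpha_alpha_of_add_lt_of_le_add_s1 (hc : (c : ℕ) + s < n) (hd : n ≤ (d : ℕ) + s) :
    sMul (alpha c d k) (alpha a b s) = alpha a b k := by
  rw [sMul_alpha_left, alpha_apply_of_add_lt hc, alpha_apply_of_le_add hd]

theorem sMul_alpha_alpha_of_le_add_s1 (hcd : c ≤ d) (hc : n ≤ (c : ℕ) + s) :
    sMul (alpha c d k) (alpha a b s) = alpha a b n := by
  have hd : n ≤ (d : ℕ) + s := hc.trans (Nat.add_le_add_right hcd s)
  rw [sMul_alpha_left, alpha_apply_of_le_add hc, alpha_apply_of_le_add hd, alpha_same, alpha_length]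

end

theorem stmt1_general {n : ℕ} (a b : Fin n) {c d : Fin n} (hcd : c ≤ d) (k s : ℕ) :
    (s ≤ n - (d : ℕ) - 1 →
      sMul (alpha c d k) (alpha a b s) = alpha a b 0) ∧
    (n - (d : ℕ) ≤ s → s ≤ n - (c : ℕ) - 1 →
      sMul (alpha c d k) (alpha a b s) = alpha a b k) ∧
    (n - (c : ℕ) ≤ s →
      sMul (alpha c d k) (alpha a b s) = alpha a b n) :=
  ⟨fun hs => sMul_alpha_alpha_of_add_lt_s1 hcd (by omega),
    fun hds hsc => sMul_alpha_alpha_of_add_lt_of_le_add_s1 (by omega) (by omega),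
    fun hs => sMul_alpha_alpha_of_le_add_s1 hcd (by omega)⟩

/-- For every `k ∈ {0,…,n}` and every `s ∈ {0,…,n}`:
if `s ≤ n − b − 1` then `α_k · α_s = α_0`; if `n − b ≤ s ≤ n − a − 1` then
`α_k · α_s = α_k`; and if `n − a ≤ s ≤ n` then `α_k · α_s = α_n`. -/
theorem stmt1 (n : ℕ) (a b : Fin n) (hab : a < b)
    (k s : ℕ) (hk : k ≤ n) (hs : s ≤ n) :
    (s ≤ n - (b : ℕ) - 1 →
      sMul (alpha a b k) (alpha a b s) = alpha a b 0) ∧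
    (n - (b : ℕ) ≤ s → s ≤ n - (a : ℕ) - 1 →
      sMul (alpha a b k) (alpha a b s) = alpha a b k) ∧
    (n - (a : ℕ) ≤ s →
      sMul (alpha a b k) (alpha a b s) = alpha a b n) :=
  stmt1_general a b hab.le k s
end

section
/- Let R be a non-unital semiring, let d : R → R satisfy d(x + y) = d(x) + d(y) and d(x·y) = d(x)·y + x·d(y) for all x, y ∈ R, and let I ⊆ R be a two-sided ideal (closed under addition and satisfying r·x ∈ I and x·r ∈ I for all x ∈ I, r ∈ R) with d(I) ⊆ I. Then the set ∫_R I = {x ∈ R : ∃ m ∈ ℕ, d^[m](x) ∈ I} is closed under addition, multiplication and d. -/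
/-!
Expanding `d^[m + n] (x * y)` by the Leibniz rule gives a sum of products `d^[i] x * d^[j] y` with
`i + j = m + n`, so that `m ≤ i` or `n ≤ j`. If `d^[m] x` and `d^[n] y` lie in an ideal stable
under `d`, then so does every term. An induction that peels off one derivative at a time, lowering
either `m` or `n`, avoids the binomial coefficients of the full expansion.
-/

/-- The integral `∫_R I` of a set `I` along `d`: the elements that some iterate of `d` sends
into `I`. The iterate may be the zeroth one, so that `I` itself is contained in its integral. -/
def iteratedAntiderivatives {R : Type*} (d : R → R) (I : Set R) : Set R :=
  {x | ∃ m : ℕ, d^[m] x ∈ I}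

section

open Set

variable {R : Type*} {d : R → R} {I : Set R}

theorem iterate_mem_of_le {m n : ℕ} {x : R} (hId : MapsTo d I I) (hmn : m ≤ n)
    (hx : d^[m] x ∈ I) : d^[n] x ∈ I := by
  rw [← Nat.sub_add_cancel hmn, Function.iterate_add_apply]
  exact hId.iterate (n - m) hx

theorem iterate_add_of_additive [Add R] (hadd : ∀ x y, d (x + y) = d x + d y) (n : ℕ) (x y : R) :
    d^[n] (x + y) = d^[n] x + d^[n] y :=
  Function.Semiconj₂.iterate hadd n x y

theorem iterate_add_mul_mem_of_leibniz [Add R] [Mul R]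
    (hadd : ∀ x y, d (x + y) = d x + d y) (hmul : ∀ x y, d (x * y) = d x * y + x * d y)
    (hIadd : ∀ x ∈ I, ∀ y ∈ I, x + y ∈ I) (hIl : ∀ x ∈ I, ∀ r, r * x ∈ I)
    (hIr : ∀ x ∈ I, ∀ r, x * r ∈ I) (hId : MapsTo d I I) {m n : ℕ} {x y : R}
    (hx : d^[m] x ∈ I) (hy : d^[n] y ∈ I) : d^[m + n] (x * y) ∈ I := by
  induction m generalizing n x y with
  | zero => exact hId.iterate _ (hIr x hx y)
  | succ m ihm =>
    induction n generalizing y with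
    | zero => exact hId.iterate _ (hIl y hy x)
    | succ n ihn =>
      have hleft : d^[m + 1 + n] (d x * y) ∈ I := Nat.succ_add_eq_add_succ m n ▸ ihm hx hy
      have hright : d^[m + 1 + n] (x * d y) ∈ I := ihn hy
      rw [← Nat.add_assoc, Function.iterate_succ_apply, hmul, iterate_add_of_additive hadd]
      exact hIadd _ hleft _ hright

theorem add_mem_iteratedAntiderivatives [Add R] (hadd : ∀ x y, d (x + y) = d x + d y)
    (hIadd : ∀ x ∈ I, ∀ y ∈ I, x + y ∈ I) (hId : MapsTo d I I) {x y : R}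
    (hx : x ∈ iteratedAntiderivatives d I) (hy : y ∈ iteratedAntiderivatives d I) :
    x + y ∈ iteratedAntiderivatives d I := by
  obtain ⟨m, hm⟩ := hx
  obtain ⟨n, hn⟩ := hy
  refine ⟨max m n, ?_⟩
  rw [iterate_add_of_additive hadd]
  exact hIadd _ (iterate_mem_of_le hId (le_max_left m n) hm) _
    (iterate_mem_of_le hId (le_max_right m n) hn)

theorem mul_mem_iteratedAntiderivatives [Add R] [Mul R]
    (hadd : ∀ x y, d (x + y) = d x + d y) (hmul : ∀ x y, d (x * y) = d x * y + x * d y)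
    (hIadd : ∀ x ∈ I, ∀ y ∈ I, x + y ∈ I) (hIl : ∀ x ∈ I, ∀ r, r * x ∈ I)
    (hIr : ∀ x ∈ I, ∀ r, x * r ∈ I) (hId : MapsTo d I I) {x y : R}
    (hx : x ∈ iteratedAntiderivatives d I) (hy : y ∈ iteratedAntiderivatives d I) :
    x * y ∈ iteratedAntiderivatives d I := by
  obtain ⟨m, hm⟩ := hx
  obtain ⟨n, hn⟩ := hy
  exact ⟨m + n, iterate_add_mul_mem_of_leibniz hadd hmul hIadd hIl hIr hId hm hn⟩

theorem mapsTo_iteratedAntiderivatives (hId : MapsTo d I I) :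
    MapsTo d (iteratedAntiderivatives d I) (iteratedAntiderivatives d I) := by
  rintro x ⟨m, hm⟩
  have hdx : d^[m + 1] x ∈ I := iterate_mem_of_le hId m.le_succ hm
  exact ⟨m, hdx⟩

theorem stmt6_general [Add R] [Mul R]
    (hadd : ∀ x y, d (x + y) = d x + d y) (hmul : ∀ x y, d (x * y) = d x * y + x * d y)
    (hIadd : ∀ x ∈ I, ∀ y ∈ I, x + y ∈ I) (hIl : ∀ x ∈ I, ∀ r, r * x ∈ I)
    (hIr : ∀ x ∈ I, ∀ r, x * r ∈ I) (hId : MapsTo d I I) :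
    (∀ x ∈ iteratedAntiderivatives d I, ∀ y ∈ iteratedAntiderivatives d I,
      x + y ∈ iteratedAntiderivatives d I) ∧
    (∀ x ∈ iteratedAntiderivatives d I, ∀ y ∈ iteratedAntiderivatives d I,
      x * y ∈ iteratedAntiderivatives d I) ∧
    (∀ x ∈ iteratedAntiderivatives d I, d x ∈ iteratedAntiderivatives d I) :=
  ⟨fun _ hx _ hy ↦ add_mem_iteratedAntiderivatives hadd hIadd hId hx hy,
    fun _ hx _ hy ↦ mul_mem_iteratedAntiderivatives hadd hmul hIadd hIl hIr hId hx hy,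
    mapsTo_iteratedAntiderivatives hId⟩

end

/-- If `R` is a (non-unital) semiring, `d : R → R` is additive and
satisfies the Leibniz rule, and `I` is a two-sided ideal of `R` closed under
`d`, then the set `∫_R I = {x ∈ R : ∃ m, d^[m] x ∈ I}` is closed under
addition, multiplication, and `d`. -/
theorem stmt6 (R : Type*) [NonUnitalSemiring R] (d : R → R)
    (hadd : ∀ x y : R, d (x + y) = d x + d y)
    (hmul : ∀ x y : R, d (x * y) = d x * y + x * d y)
    (I : Set R)
    (hIadd : ∀ x ∈ I, ∀ y ∈ I, x + y ∈ I)
    (hIl : ∀ x ∈ I, ∀ r : R, r * x ∈ I)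
    (hIr : ∀ x ∈ I, ∀ r : R, x * r ∈ I)
    (hId : ∀ x ∈ I, d x ∈ I) :
    (∀ x ∈ {x : R | ∃ m : ℕ, d^[m] x ∈ I}, ∀ y ∈ {x : R | ∃ m : ℕ, d^[m] x ∈ I},
      x + y ∈ {x : R | ∃ m : ℕ, d^[m] x ∈ I}) ∧
    (∀ x ∈ {x : R | ∃ m : ℕ, d^[m] x ∈ I}, ∀ y ∈ {x : R | ∃ m : ℕ, d^[m] x ∈ I},
      x * y ∈ {x : R | ∃ m : ℕ, d^[m] x ∈ I}) ∧
    (∀ x ∈ {x : R | ∃ m : ℕ, d^[m] x ∈ I}, d x ∈ {x : R | ∃ m : ℕ, d^[m] x ∈ I}) :=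
  stmt6_general hadd hmul hIadd hIl hIr hId
end

section
/- For every α_m ∈ STR{a,b} (0 ≤ m ≤ n), the map δ_{α_m} : STR{a,b} → STR{a,b} defined by δ_{α_m}(β) = α_m · β + β · α_m is a derivation of STR{a,b}: for all 0 ≤ k, ℓ ≤ n, δ_{α_m}(α_k + α_ℓ) = δ_{α_m}(α_k) + δ_{α_m}(α_ℓ) and δ_{α_m}(α_k · α_ℓ) = δ_{α_m}(α_k) · α_ℓ + α_k · δ_{α_m}(α_ℓ). -/
/-- The Jordan-type map `δ_α(β) = α·β + β·α`. -/
def delta {N : ℕ} (α f : Fin N → Fin N) : Fin N → Fin N :=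
  sAdd (sMul α f) (sMul f α)

/-! A monotone map of a chain preserves `+`, so additivity is immediate and the Leibniz rule for
`δ_f` on `g·h` reduces to the single inequality `g·f·h ≤ f·g·h + g·h·f`. On `{a, b}`, where all maps
of the string take their values, a monotone `h` is either constant, and then `g·f·h = f·g·h`, or
the identity, and then `g·f·h = g·f = g·h·f`. -/

section ChainString

variable {X : Type*} [LinearOrder X] {a b : X} {f g h : X → X}

/-- The string `STR{a,b}` of an arbitrary chain `X`: the monotone self-maps with values in `{a, b}`.
On `Fin n` with `a < b` these are the maps `alpha a b k`. -/
def chainString (a b : X) : Set (X → X) :=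
  {f | Monotone f ∧ ∀ x, f x ∈ ({a, b} : Set X)}

/-- The map `δ_f(g) = f·g + g·f` on self-maps of an arbitrary chain; since products are written in
diagram order, `f·g` is `g ∘ f`. It agrees definitionally with `delta` on `Fin n`. -/
def chainDelta (f g : X → X) : X → X :=
  g ∘ f ⊔ f ∘ g

theorem chainDelta_sup (hf : Monotone f) (g h : X → X) :
    chainDelta f (g ⊔ h) = chainDelta f g ⊔ chainDelta f h := by
  have f_comp_sup : f ∘ (g ⊔ h) = f ∘ g ⊔ f ∘ h := funext fun _ => hf.map_sup _ _
  calc chainDelta f (g ⊔ h) = (g ∘ f ⊔ h ∘ f) ⊔ (f ∘ g ⊔ f ∘ h) :=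
        congrArg ((g ⊔ h) ∘ f ⊔ ·) f_comp_sup
    _ = chainDelta f g ⊔ chainDelta f h := sup_sup_sup_comm _ _ _ _

theorem apply_eq_apply_or_eqOn_id_of_mapsTo_pair (hh : Monotone h)
    (hab : Set.MapsTo h {a, b} {a, b}) : h a = h b ∨ Set.EqOn h id {a, b} := by
  have ha : h a = a ∨ h a = b := hab (Set.mem_insert a {b})
  have hb : h b = a ∨ h b = b := hab (Set.mem_insert_of_mem a rfl)
  rcases ha with ha | ha <;> rcases hb with hb | hb
  · exact .inl (ha.trans hb.symm)
  · right
    rintro x (rfl | rfl)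
    exacts [ha, hb]
  · left
    rcases le_total a b with hle | hle
    · exact (hh hle).antisymm (by rwa [ha, hb])
    · exact le_antisymm (by rwa [ha, hb]) (hh hle)
  · exact .inl (ha.trans hb.symm)

theorem comp_comp_le_sup_of_mapsTo_pair (hf : ∀ x, f x ∈ ({a, b} : Set X))
    (hg : ∀ x, g x ∈ ({a, b} : Set X)) (hh : Monotone h) (hab : Set.MapsTo h {a, b} {a, b}) :
    h ∘ f ∘ g ≤ h ∘ g ∘ f ⊔ f ∘ h ∘ g := by
  intro x
  rcases apply_eq_apply_or_eqOn_id_of_mapsTo_pair hh hab with h_const | h_id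
  · have h_eq : ∀ y ∈ ({a, b} : Set X), h y = h b := by
      rintro y (rfl | rfl)
      exacts [h_const, rfl]
    have hfg_eq_hgf : h (f (g x)) = h (g (f x)) := (h_eq _ (hf _)).trans (h_eq _ (hg _)).symm
    exact le_sup_of_le_left hfg_eq_hgf.le
  · have hfg_eq_fhg : h (f (g x)) = f (h (g x)) :=
      (h_id (hf _)).trans (congrArg f (h_id (hg x)).symm)
    exact le_sup_of_le_right hfg_eq_fhg.le

theorem chainDelta_comp (hf : ∀ x, f x ∈ ({a, b} : Set X)) (hg : ∀ x, g x ∈ ({a, b} : Set X))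
    (hh : Monotone h) (hab : Set.MapsTo h {a, b} {a, b}) :
    chainDelta f (h ∘ g) = h ∘ chainDelta f g ⊔ chainDelta f h ∘ g := by
  have h_comp_sup : h ∘ chainDelta f g = h ∘ g ∘ f ⊔ h ∘ f ∘ g := funext fun _ => hh.map_sup _ _
  calc chainDelta f (h ∘ g) = h ∘ g ∘ f ⊔ f ∘ h ∘ g := rfl
    _ = (h ∘ g ∘ f ⊔ f ∘ h ∘ g) ⊔ h ∘ f ∘ g :=
        (sup_eq_left.2 (comp_comp_le_sup_of_mapsTo_pair hf hg hh hab)).symm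
    _ = (h ∘ g ∘ f ⊔ h ∘ f ∘ g) ⊔ (h ∘ f ∘ g ⊔ f ∘ h ∘ g) := by
        rw [sup_sup_distrib_right, sup_comm (f ∘ h ∘ g)]
    _ = h ∘ chainDelta f g ⊔ chainDelta f h ∘ g := congrArg (· ⊔ chainDelta f h ∘ g) h_comp_sup.symm

theorem stmt7_general (hf : f ∈ chainString a b) (hg : g ∈ chainString a b)
    (hh : h ∈ chainString a b) :
    chainDelta f (g ⊔ h) = chainDelta f g ⊔ chainDelta f h ∧
      chainDelta f (h ∘ g) = h ∘ chainDelta f g ⊔ chainDelta f h ∘ g :=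
  ⟨chainDelta_sup hf.1 g h, chainDelta_comp hf.2 hg.2 hh.1 fun x _ => hh.2 x⟩

end ChainString

theorem alpha_mem_chainString {n : ℕ} {a b : Fin n} (hab : a ≤ b) (k : ℕ) :
    alpha a b k ∈ chainString a b := by
  constructor
  · intro i j hij
    unfold alpha
    split_ifs
    exacts [le_rfl, hab, by lia, le_rfl]
  · intro i
    unfold alpha
    split_ifs
    exacts [Set.mem_insert a {b}, Set.mem_insert_of_mem a rfl]

/-- For every `α_m ∈ STR{a,b}`, the map `δ_{α_m}` defined by
`δ_{α_m}(β) = α_m·β + β·α_m` is a derivation of `STR{a,b}`: it is additive and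
satisfies the Leibniz rule on all elements `α_k, α_ℓ` of the string. -/
theorem stmt7 (n : ℕ) (a b : Fin n) (hab : a < b) (m : ℕ) (hm : m ≤ n) :
    ∀ k ℓ : ℕ, k ≤ n → ℓ ≤ n →
      delta (alpha a b m) (sAdd (alpha a b k) (alpha a b ℓ)) =
        sAdd (delta (alpha a b m) (alpha a b k)) (delta (alpha a b m) (alpha a b ℓ)) ∧
      delta (alpha a b m) (sMul (alpha a b k) (alpha a b ℓ)) =
        sAdd (sMul (delta (alpha a b m) (alpha a b k)) (alpha a b ℓ))
             (sMul (alpha a b k) (delta (alpha a b m) (alpha a b ℓ))) := by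
  intro k ℓ _ _
  have mem := alpha_mem_chainString hab.le
  exact stmt7_general (mem m) (mem k) (mem ℓ)
end

section
/- All the derivations δ_α with α ∈ STR{a,b} commute: for all 0 ≤ j, m, k ≤ n, δ_{α_j}(δ_{α_m}(α_k)) = δ_{α_m}(δ_{α_j}(α_k)). -/
/-!
Since addition is commutative, `δ_α(β)` is the Jordan product of `α` and `β`, symmetric in both.
A map `f` into `{a, b}` that is monotone on `{a, b}` is there the lattice polynomial
`x ↦ f a ⊔ x ⊓ f b`, so `δ_f(g)` is a lattice polynomial in the values of `f` and `g`. Iterating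
it and absorbing terms by distributivity leaves an expression for `δ_f(δ_g(h))` that is symmetric
in all three maps.
-/

/-- An enlargement of the string `STR{a,b}` closed under `δ`: the maps with values in
`{a, b}` that are monotone on `{a, b}`, but possibly not elsewhere. -/
structure IsStringLike {X : Type*} [Preorder X] (a b : X) (f : X → X) : Prop where
  apply_mem : ∀ x, f x ∈ ({a, b} : Set X)
  monotoneOn : MonotoneOn f {a, b}

theorem sup_inf_sup_sup_sup_inf {L : Type*} [DistribLattice L] (c x r y q : L) :
    c ⊔ (x ⊓ (c ⊔ r) ⊔ (c ⊔ y) ⊓ q) = c ⊔ (x ⊓ r ⊔ y ⊓ q) := by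
  have absorb_left : c ⊔ x ⊓ (c ⊔ r) = c ⊔ x ⊓ r := by
    rw [sup_inf_left, sup_left_idem, ← sup_inf_left]
  have absorb_right : c ⊔ (c ⊔ y) ⊓ q = c ⊔ y ⊓ q := by
    rw [sup_inf_left, sup_left_idem, ← sup_inf_left]
  rw [sup_sup_distrib_left, absorb_left, absorb_right, ← sup_sup_distrib_left]

namespace IsStringLike

section Preorder

variable {X : Type*} [Preorder X] {a b : X} {f : X → X}

theorem apply_left_le_apply_right (hf : IsStringLike a b f) (hab : a ≤ b) : f a ≤ f b :=
  hf.monotoneOn (Set.mem_insert a {b}) (Set.mem_insert_of_mem a rfl) hab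

theorem apply_mem_Icc (hf : IsStringLike a b f) (hab : a ≤ b) (x : X) : f x ∈ Set.Icc a b :=
  Set.pair_subset (Set.left_mem_Icc.2 hab) (Set.right_mem_Icc.2 hab) (hf.apply_mem x)

end Preorder

theorem apply_eq_sup_inf {X : Type*} [Lattice X] {a b : X} {f : X → X}
    (hf : IsStringLike a b f) (hab : a ≤ b) {x : X} (hx : x ∈ ({a, b} : Set X)) :
    f x = f a ⊔ x ⊓ f b := by
  rcases hx with rfl | rfl
  · exact (sup_eq_left.2 (inf_le_left.trans (hf.apply_mem_Icc hab x).1)).symm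
  · rw [inf_eq_right.2 (hf.apply_mem_Icc hab x).2,
      sup_eq_right.2 (hf.apply_left_le_apply_right hab)]

variable {n : ℕ} {a b : Fin n} {f g h : Fin n → Fin n}

theorem delta_apply (hf : IsStringLike a b f) (hg : IsStringLike a b g) (hab : a ≤ b)
    (x : Fin n) : delta f g x = f a ⊔ g a ⊔ (f x ⊓ g b ⊔ g x ⊓ f b) :=
  calc
    delta f g x = g (f x) ⊔ f (g x) := rfl
    _ = (g a ⊔ f x ⊓ g b) ⊔ (f a ⊔ g x ⊓ f b) := by
      rw [hg.apply_eq_sup_inf hab (hf.apply_mem x), hf.apply_eq_sup_inf hab (hg.apply_mem x)]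
    _ = f a ⊔ g a ⊔ (f x ⊓ g b ⊔ g x ⊓ f b) := by rw [sup_sup_sup_comm, sup_comm (g a)]

theorem delta_apply_left (hf : IsStringLike a b f) (hg : IsStringLike a b g) (hab : a ≤ b) :
    delta f g a = f a ⊔ g a := by
  rw [hf.delta_apply hg hab, sup_eq_left]
  exact sup_le_sup inf_le_left inf_le_left

theorem delta_apply_right (hf : IsStringLike a b f) (hg : IsStringLike a b g) (hab : a ≤ b) :
    delta f g b = f a ⊔ g a ⊔ f b ⊓ g b := by
  rw [hf.delta_apply hg hab, inf_comm (g b), sup_idem]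

protected theorem delta (hf : IsStringLike a b f) (hg : IsStringLike a b g) :
    IsStringLike a b (delta f g) where
  apply_mem x := max_rec' (· ∈ ({a, b} : Set (Fin n))) (hg.apply_mem (f x)) (hf.apply_mem (g x))
  monotoneOn x hx y hy hxy :=
    sup_le_sup (hg.monotoneOn (hf.apply_mem x) (hf.apply_mem y) (hf.monotoneOn hx hy hxy))
      (hf.monotoneOn (hg.apply_mem x) (hg.apply_mem y) (hg.monotoneOn hx hy hxy))

theorem delta_delta_apply (hf : IsStringLike a b f) (hg : IsStringLike a b g)
    (hh : IsStringLike a b h) (hab : a ≤ b) (x : Fin n) :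
    delta f (delta g h) x =
      f a ⊔ g a ⊔ h a ⊔ (f x ⊓ g b ⊓ h b ⊔ g x ⊓ f b ⊓ h b ⊔ h x ⊓ f b ⊓ g b) :=
  calc
    _ = f a ⊔ (g a ⊔ h a) ⊔ (f x ⊓ (g a ⊔ h a ⊔ g b ⊓ h b) ⊔
          (g a ⊔ h a ⊔ (g x ⊓ h b ⊔ h x ⊓ g b)) ⊓ f b) := by
      rw [hf.delta_apply (hg.delta hh) hab, hg.delta_apply_left hh hab,
        hg.delta_apply_right hh hab, hg.delta_apply hh hab]
    _ = f a ⊔ (g a ⊔ h a) ⊔ (f x ⊓ (g b ⊓ h b) ⊔ (g x ⊓ h b ⊔ h x ⊓ g b) ⊓ f b) := by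
      rw [sup_assoc, sup_inf_sup_sup_sup_inf, ← sup_assoc]
    _ = f a ⊔ g a ⊔ h a ⊔ (f x ⊓ g b ⊓ h b ⊔ g x ⊓ f b ⊓ h b ⊔ h x ⊓ f b ⊓ g b) := by
      rw [inf_sup_right, inf_right_comm (g x), inf_right_comm (h x), ← inf_assoc (f x),
        ← sup_assoc (f a), ← sup_assoc (f x ⊓ g b ⊓ h b)]

end IsStringLike

theorem monotone_alpha {n : ℕ} {a b : Fin n} (hab : a ≤ b) (k : ℕ) : Monotone (alpha a b k) := by
  intro i j hij
  unfold alpha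
  split_ifs <;> first | exact le_rfl | exact hab | omega

theorem isStringLike_alpha {n : ℕ} {a b : Fin n} (hab : a ≤ b) (k : ℕ) :
    IsStringLike a b (alpha a b k) where
  apply_mem _ := ite_eq_or_eq _ a b
  monotoneOn := (monotone_alpha hab k).monotoneOn _

theorem stmt8_general {n : ℕ} {a b : Fin n} (hab : a ≤ b) {f g h : Fin n → Fin n}
    (hf : IsStringLike a b f) (hg : IsStringLike a b g) (hh : IsStringLike a b h) :
    delta f (delta g h) = delta g (delta f h) := by
  funext x
  rw [hf.delta_delta_apply hg hh hab, hg.delta_delta_apply hf hh hab, sup_comm (f a),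
    sup_comm (f x ⊓ g b ⊓ h b), inf_right_comm (h x)]

/-- All the derivations `δ_α`, `α ∈ STR{a,b}`, commute: for all
`0 ≤ j, m, k ≤ n`, `δ_{α_j}(δ_{α_m}(α_k)) = δ_{α_m}(δ_{α_j}(α_k))`. -/
theorem stmt8 (n : ℕ) (a b : Fin n) (hab : a < b)
    (j m k : ℕ) (hj : j ≤ n) (hm : m ≤ n) (hk : k ≤ n) :
    delta (alpha a b j) (delta (alpha a b m) (alpha a b k)) =
      delta (alpha a b m) (delta (alpha a b j) (alpha a b k)) :=
  stmt8_general hab.le (isStringLike_alpha hab.le j) (isStringLike_alpha hab.le m)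
    (isStringLike_alpha hab.le k)
end

section
/- The string STR{a_1,…,a_m} is closed under the addition and the multiplication of the endomorphism semiring of C_n: for all admissible indices, α_{k,ℓ} + α_{s,r} ∈ STR{a_1,…,a_m} and α_{k,ℓ} · α_{s,r} ∈ STR{a_1,…,a_m}; hence STR{a_1,…,a_m} is a subsemiring of the endomorphism semiring of C_n. -/
/-- The string of type `m`: all `α_{k,ℓ} = alpha (a ℓ) (a (ℓ+1)) k` with
`0 ≤ k ≤ n` and `1 ≤ ℓ ≤ m − 1`. -/
def STRm {N : ℕ} (a : ℕ → Fin N) (n m : ℕ) : Set (Fin N → Fin N) :=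
  {f | ∃ k ≤ n, ∃ ℓ, 1 ≤ ℓ ∧ ℓ ≤ m - 1 ∧ f = alpha (a ℓ) (a (ℓ + 1)) k}

/-!
Each element of the string is a step map: it takes the value `a ℓ` on an initial segment of the
chain and `a (ℓ + 1)` on the rest. The steps with index `ℓ < r` lie pointwise below those with
index `r`, and two steps with the same index are comparable according to the length of their
initial segments. So the string is a chain, and the sum of two of its elements is the larger one.
For products, the preimage of an initial segment under a monotone map is an initial segment, so a
monotone map followed by a step is a step with the same pair of values. Thus the string is even a
left ideal.
-/

theorem le_succ_of_monotoneOn_Icc {α : Type*} [Preorder α] {a : ℕ → α} {m ℓ : ℕ}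
    (ha : MonotoneOn a (Set.Icc 1 m)) (hℓ : 1 ≤ ℓ) (hℓm : ℓ ≤ m - 1) : a ℓ ≤ a (ℓ + 1) :=
  ha ⟨hℓ, by omega⟩ ⟨by omega, by omega⟩ ℓ.le_succ

section Strings

variable {N : ℕ}

theorem monotone_alpha_s11 {b c : Fin N} (hbc : b ≤ c) (k : ℕ) : Monotone (alpha b c k) := by
  intro i j hij
  unfold alpha
  split_ifs <;> omega

theorem alpha_mem_STRm {n m k ℓ : ℕ} {a : ℕ → Fin N} (hk : k ≤ n) (hℓ : 1 ≤ ℓ)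
    (hℓm : ℓ ≤ m - 1) : alpha (a ℓ) (a (ℓ + 1)) k ∈ STRm a n m :=
  ⟨k, hk, ℓ, hℓ, hℓm, rfl⟩

theorem monotone_of_mem_STRm {n m : ℕ} {a : ℕ → Fin N} (ha : MonotoneOn a (Set.Icc 1 m))
    {f : Fin N → Fin N} (hf : f ∈ STRm a n m) : Monotone f := by
  obtain ⟨k, -, ℓ, hℓ, hℓm, rfl⟩ := hf
  exact monotone_alpha_s11 (le_succ_of_monotoneOn_Icc ha hℓ hℓm) k

theorem sAdd_comm (f g : Fin N → Fin N) : sAdd f g = sAdd g f :=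
  sup_comm f g

theorem sAdd_eq_right {f g : Fin N → Fin N} (hfg : f ≤ g) : sAdd f g = g :=
  sup_eq_right.mpr hfg

theorem alpha_le_alpha_of_le {b c d e : Fin N} (hbc : b ≤ c) (hcd : c ≤ d) (hde : d ≤ e)
    (k s : ℕ) : alpha b c k ≤ alpha d e s := by
  intro i
  unfold alpha
  split_ifs <;> order

theorem alpha_le_alpha_of_index_le {b c : Fin N} (hbc : b ≤ c) {k s : ℕ} (hks : k ≤ s) :
    alpha b c k ≤ alpha b c s := by
  intro i
  simp only [alpha]
  split_ifs <;> omega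

theorem isChain_STRm {n m : ℕ} {a : ℕ → Fin N} (ha : MonotoneOn a (Set.Icc 1 m)) :
    IsChain (· ≤ ·) (STRm a n m) := by
  rintro _ ⟨k, -, ℓ, hℓ, hℓm, rfl⟩ _ ⟨s, -, r, hr, hrm, rfl⟩ -
  have hstep_ℓ : a ℓ ≤ a (ℓ + 1) := le_succ_of_monotoneOn_Icc ha hℓ hℓm
  have hstep_r : a r ≤ a (r + 1) := le_succ_of_monotoneOn_Icc ha hr hrm
  rcases lt_trichotomy ℓ r with hlt | rfl | hgt
  · have hgap : a (ℓ + 1) ≤ a r := ha ⟨by omega, by omega⟩ ⟨hr, by omega⟩ hlt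
    exact .inl (alpha_le_alpha_of_le hstep_ℓ hgap hstep_r k s)
  · exact (le_total k s).imp (alpha_le_alpha_of_index_le hstep_ℓ)
      (alpha_le_alpha_of_index_le hstep_ℓ)
  · have hgap : a (r + 1) ≤ a ℓ := ha ⟨by omega, by omega⟩ ⟨hℓ, by omega⟩ hgt
    exact .inr (alpha_le_alpha_of_le hstep_r hgap hstep_ℓ s k)

theorem sAdd_mem_STRm {n m : ℕ} {a : ℕ → Fin N} (ha : MonotoneOn a (Set.Icc 1 m))
    {f g : Fin N → Fin N} (hf : f ∈ STRm a n m) (hg : g ∈ STRm a n m) :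
    sAdd f g ∈ STRm a n m := by
  rcases (isChain_STRm ha).total hf hg with hfg | hgf
  · rwa [sAdd_eq_right hfg]
  · rwa [sAdd_comm, sAdd_eq_right hgf]

theorem exists_forall_iff_add_lt_of_antitone {p : Fin N → Prop} (hp : Antitone p) :
    ∃ k ≤ N, ∀ i : Fin N, p i ↔ (i : ℕ) + k < N := by
  by_cases hall : ∀ i, p i
  · exact ⟨0, N.zero_le, fun i => iff_of_true (hall i) i.isLt⟩
  · obtain ⟨j, hj, hmin⟩ := wellFounded_lt.has_min {i | ¬p i} (not_forall.mp hall)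
    have hiff (i : Fin N) : p i ↔ i < j :=
      ⟨fun hi => lt_of_not_ge fun hji => hj (hp hji hi),
        fun hij => not_not.mp fun hi => hmin i hi hij⟩
    refine ⟨N - j, N.sub_le j, fun i => ?_⟩
    rw [hiff, Fin.lt_def]
    omega

theorem exists_sMul_alpha_eq_alpha {f : Fin N → Fin N} (hf : Monotone f) (b c : Fin N) (s : ℕ) :
    ∃ k ≤ N, sMul f (alpha b c s) = alpha b c k := by
  have hanti : Antitone fun i => (f i : ℕ) + s < N := fun i j hij hj =>
    (Nat.add_le_add_right (hf hij) s).trans_lt hj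
  obtain ⟨k, hk, hiff⟩ := exists_forall_iff_add_lt_of_antitone hanti
  exact ⟨k, hk, funext fun i => if_congr (hiff i) rfl rfl⟩

theorem sMul_mem_STRm {n m : ℕ} (hNn : N ≤ n) {a : ℕ → Fin N} {f g : Fin N → Fin N}
    (hf : Monotone f) (hg : g ∈ STRm a n m) : sMul f g ∈ STRm a n m := by
  obtain ⟨s, -, r, hr, hrm, rfl⟩ := hg
  obtain ⟨k, hk, hprod⟩ := exists_sMul_alpha_eq_alpha hf (a r) (a (r + 1)) s
  exact hprod ▸ alpha_mem_STRm (hk.trans hNn) hr hrm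

end Strings

theorem stmt11_general {n m : ℕ} {a : ℕ → Fin n} (ha : MonotoneOn a (Set.Icc 1 m)) :
    (∀ f ∈ STRm a n m, ∀ g ∈ STRm a n m, sAdd f g ∈ STRm a n m) ∧
      ∀ f : Fin n → Fin n, Monotone f → ∀ g ∈ STRm a n m, sMul f g ∈ STRm a n m :=
  ⟨fun _ hf _ hg => sAdd_mem_STRm ha hf hg, fun _ hf _ hg => sMul_mem_STRm le_rfl hf hg⟩

/-- The string `STR{a_1,…,a_m}` is closed under the addition and
multiplication of the endomorphism semiring of `C_n`: sums and products of the
`α_{k,ℓ}` again lie in the string, hence it is a subsemiring. -/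
theorem stmt11 (n m : ℕ) (hm2 : 2 ≤ m) (hmn : m ≤ n)
    (a : ℕ → Fin n)
    (hmono : ∀ i j : ℕ, 1 ≤ i → i < j → j ≤ m → a i < a j) :
    ∀ k ℓ s r : ℕ, k ≤ n → 1 ≤ ℓ → ℓ ≤ m - 1 → s ≤ n → 1 ≤ r → r ≤ m - 1 →
      sAdd (alpha (a ℓ) (a (ℓ + 1)) k) (alpha (a r) (a (r + 1)) s) ∈ STRm a n m ∧
      sMul (alpha (a ℓ) (a (ℓ + 1)) k) (alpha (a r) (a (r + 1)) s) ∈ STRm a n m := by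
  intro k ℓ s r hk hℓ hℓm hs hr hrm
  have ha : MonotoneOn a (Set.Icc 1 m) :=
    StrictMonoOn.monotoneOn fun i hi j hj hij => hmono i j hi.1 hij hj.2
  have hf := alpha_mem_STRm (a := a) hk hℓ hℓm
  have hg := alpha_mem_STRm (a := a) hs hr hrm
  exact ⟨(stmt11_general ha).1 _ hf _ hg,
    (stmt11_general ha).2 _ (monotone_of_mem_STRm ha hf) _ hg⟩
end
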